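/- (Corollary 5: reshuffling lower bound on the entanglement cost) Let ρ be a state on ℂ^{d_A} ⊗ ℂ^{d_B}, and define its tempered reshuffled negativity N_τ^R(ρ) := max{⟨W,ρ⟩ : W a self-adjoint operator on ℂ^{d_A} ⊗ ℂ^{d_B}, ‖W^R‖∞ ≤ 1, ⟨W,ρ⟩ = ‖W‖∞}. Suppose r > 0 and there exist linear maps Λ_n from self-adjoint operators on (ℂ² ⊗ ℂ²)^{⊗n} to self-adjoint operators on (ℂ^{d_A} ⊗ ℂ^{d_B})^{⊗⌊rn⌋}, each contracting the trace norm and the separable base norms ‖·‖_SEP (with respect to the bipartitions grouping all first factors against all second factors), such that (1/2)‖Λ_n(Φ₂^{⊗n}) − ρ^{⊗⌊rn⌋}‖₁ → 0 as n → ∞. Then r · log₂ N_τ^R(ρ) ≤ 1; equivalently, the entanglement cost of ρ under such operations is at least log₂ N_τ^R(ρ). -/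

import Mathlib

/-!
A feasible witness `W` has `‖W^R‖∞ ≤ 1` and `⟨W, ρ⟩ = ‖W‖∞ = c`. On a product state, `⟨W, ·⟩` is a
matrix element of `W^R` between unit vectors, so `|⟨W, σ⟩| ≤ 1` for separable `σ` and
`⟨W, X⟩ ≤ ‖X‖_SEP` (`hip_le_sepBaseNorm`). This needs the infimum defining `‖X‖_SEP` to run over a
nonempty set, which holds because product states span the Hermitian operators (`exists_dec`).

Reshuffling and the operator norm are compatible with tensor powers (`BddOp.tpow`), so with
`m = ⌊rn⌋` the operator `W^{⊗m}` obeys the same bound on separable states, has norm at most `c ^ m`,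
and `⟨W^{⊗m}, ρ^{⊗m}⟩ = c ^ m`. When `Λ_n(Φ₂^{⊗n})` is within trace distance `1/4` of `ρ^{⊗m}`,
Hölder's inequality (`abs_hip_le`) gives
`c ^ m / 2 ≤ ⟨W^{⊗m}, Λ_n(Φ₂^{⊗n})⟩ ≤ ‖Λ_n(Φ₂^{⊗n})‖_SEP ≤ ‖Φ₂^{⊗n}‖_SEP ≤ 2 · 2 ^ n`.
The last step (`sepBaseNorm_phi2_le`) writes the maximally entangled state as an average of product
operators over random phase vectors minus a diagonal separable operator. Comparing exponential
growth rates in `n` yields `c ^ r ≤ 2` for every feasible `c`.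
-/

open scoped ComplexOrder
open Filter

noncomputable section

/-- The real vector space of self-adjoint (Hermitian) operators on `ℂ^ι`. -/
abbrev HMat (ι : Type) [Fintype ι] [DecidableEq ι] : Type :=
  selfAdjoint (Matrix ι ι ℂ)

variable {ι κ : Type} [Fintype ι] [DecidableEq ι] [Fintype κ] [DecidableEq κ]

/-- The matrix underlying a self-adjoint operator is Hermitian. -/
def herm (X : HMat ι) : X.1.IsHermitian := X.2

/-- The (real) Hilbert–Schmidt inner product `⟨Q, X⟩ = Tr (Q X)`. -/
def hip (Q X : HMat ι) : ℝ := (Matrix.trace (Q.1 * X.1)).re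

/-- The trace norm of a self-adjoint operator: the sum of absolute values of eigenvalues. -/
def trNorm (X : HMat ι) : ℝ := ∑ i, |(herm X).eigenvalues i|

/-- The operator norm of a self-adjoint operator: the largest absolute value of an eigenvalue. -/
def opNorm (X : HMat ι) : ℝ := ⨆ i, |(herm X).eigenvalues i|

/-- A state: a positive semidefinite operator of unit trace. -/
def IsState (ρ : HMat ι) : Prop := ρ.1.PosSemidef ∧ Matrix.trace ρ.1 = 1

/-- A pure state: a rank-one orthogonal projection. -/
def IsPureState (φ : HMat ι) : Prop := IsState φ ∧ φ.1 * φ.1 = φ.1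

/-- A norm-like function on self-adjoint operators. -/
structure MatNorm (ι : Type) [Fintype ι] [DecidableEq ι] where
  toFun : HMat ι → ℝ
  eq_zero' : ∀ X, toFun X = 0 → X = 0
  smul' : ∀ (t : ℝ) (X), toFun (t • X) = |t| * toFun X
  add_le' : ∀ X Y, toFun (X + Y) ≤ toFun X + toFun Y

/-- A resource norm: a norm with `‖ρ‖ ≥ 1` on every state. -/
structure ResourceNorm (ι : Type) [Fintype ι] [DecidableEq ι] extends MatNorm ι where
  one_le_state' : ∀ ρ, IsState ρ → 1 ≤ toFun ρ

/-- The dual norm `‖Q‖° = sup {⟨Q, X⟩ : ‖X‖ ≤ 1}`. -/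
def dualNormF (ν : HMat ι → ℝ) (Q : HMat ι) : ℝ :=
  sSup {r | ∃ X, ν X ≤ 1 ∧ r = hip Q X}

/-- Membership in the class `O_μ` of maps contracting the trace norm and the resource norms. -/
def MemO (νi : ResourceNorm ι) (νo : ResourceNorm κ) (Λ : HMat ι →ₗ[ℝ] HMat κ) : Prop :=
  (∀ X, trNorm (Λ X) ≤ trNorm X) ∧ (∀ X, νo.toFun (Λ X) ≤ νi.toFun X)

/-- The trace-norm ε-ball around a state. -/
def ball (ρ : HMat ι) (ε : ℝ) : Set (HMat ι) :=
  {X | trNorm X ≤ 1 ∧ trNorm (X - ρ) ≤ ε}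

/-- Loewner order: `A ≤ B` iff `B - A` is positive semidefinite. -/
def loew (A B : Matrix ι ι ℂ) : Prop := (B - A).PosSemidef

/-- The feasible values `⟨Q, Z⟩` entering the emancipated hypothesis testing quantity. -/
def dhSet (ρ Z : HMat ι) (ε : ℝ) : Set ℝ :=
  {r | ∃ Q : HMat ι, loew (-(1 : Matrix ι ι ℂ)) Q.1 ∧ loew Q.1 1 ∧
        1 - ε ≤ hip Q ρ ∧ r = hip Q Z}

/-- The non-logarithmic emancipated hypothesis testing quantity `d_ħ^ε(ρ‖Z)`,
with value `+∞` when the infimum is `≤ 0`. -/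
def dEmanc (ρ Z : HMat ι) (ε : ℝ) : EReal :=
  if 0 < sInf (dhSet ρ Z ε) then (((sInf (dhSet ρ Z ε))⁻¹ : ℝ) : EReal) else ⊤

/-- The emancipated hypothesis testing relative entropy `D_ħ^ε(ρ‖Z)` (base-2 logarithmic form),
with value `+∞` when the infimum is `≤ 0`. -/
def DEmanc (ρ Z : HMat ι) (ε : ℝ) : EReal :=
  if 0 < sInf (dhSet ρ Z ε) then ((-Real.logb 2 (sInf (dhSet ρ Z ε)) : ℝ) : EReal) else ⊤


/-- The rank-one operator `|v⟩⟨v|`. -/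
def rankOne {ι : Type} [Fintype ι] [DecidableEq ι] (v : ι → ℂ) : HMat ι :=
  ⟨Matrix.vecMulVec v (star v), by
    refine Matrix.IsHermitian.isSelfAdjoint ?_
    refine Matrix.IsHermitian.ext fun i j => ?_
    simp [Matrix.vecMulVec_apply, mul_comm]⟩

/-- The tensor power of a bipartite operator, regrouped as bipartite (all first factors
against all second factors). -/
def tpowBip {α β : Type} [Fintype α] [DecidableEq α] [Fintype β] [DecidableEq β]
    (A : HMat (α × β)) (n : ℕ) : HMat ((Fin n → α) × (Fin n → β)) :=
  ⟨Matrix.of fun i j => ∏ k, A.1 (i.1 k, i.2 k) (j.1 k, j.2 k), by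
    refine Matrix.IsHermitian.isSelfAdjoint ?_
    refine Matrix.IsHermitian.ext fun i j => ?_
    simp only [Matrix.of_apply]
    rw [star_prod]
    exact Finset.prod_congr rfl fun k _ => (herm A).apply _ _⟩

/-- The reshuffling `X^R` of a bipartite operator: `(X^R)_{(i,k),(j,l)} = X_{ij,kl}`. -/
def reshuffle {α β : Type} (X : Matrix (α × β) (α × β) ℂ) :
    Matrix (α × α) (β × β) ℂ :=
  Matrix.of fun ik jl => X (ik.1, jl.1) (ik.2, jl.2)

/-- The operator norm (largest singular value) of a rectangular complex matrix. -/
def opNormRect {α β : Type} [Fintype α] [Fintype β] [DecidableEq β]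
    (M : Matrix α β ℂ) : ℝ :=
  ⨆ i, Real.sqrt ((Matrix.posSemidef_conjTranspose_mul_self M).1.eigenvalues i)

/-- The set of separable states on a bipartite system: finite convex combinations of
tensor products of pure states. -/
def SepSet (α β : Type) [Fintype α] [Fintype β] : Set (Matrix (α × β) (α × β) ℂ) :=
  {σ | ∃ (m : ℕ) (q : Fin m → ℝ) (ψ : Fin m → α → ℂ) (χ : Fin m → β → ℂ),
    (∀ t, 0 ≤ q t) ∧ (∑ t, q t) = 1 ∧
    (∀ t, ∑ i, Complex.normSq (ψ t i) = 1) ∧ (∀ t, ∑ j, Complex.normSq (χ t j) = 1) ∧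
    σ = ∑ t, (q t : ℂ) •
      Matrix.of (fun p p' : α × β =>
        ψ t p.1 * (starRingEnd ℂ) (ψ t p'.1) * (χ t p.2 * (starRingEnd ℂ) (χ t p'.2)))}

/-- The base norm `‖X‖_SEP` associated with the separable states. -/
def sepBaseNorm {α β : Type} [Fintype α] [Fintype β]
    (X : Matrix (α × β) (α × β) ℂ) : ℝ :=
  sInf {r | ∃ (lp lm : ℝ) (sp sm : Matrix (α × β) (α × β) ℂ),
    0 ≤ lp ∧ 0 ≤ lm ∧ sp ∈ SepSet α β ∧ sm ∈ SepSet α β ∧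
    X = (lp : ℂ) • sp - (lm : ℂ) • sm ∧ r = lp + lm}

/-- The norm `‖X‖_{g,SEP}` associated with the generalised robustness. -/
def sepGNorm {α β : Type} [Fintype α] [Fintype β]
    (X : Matrix (α × β) (α × β) ℂ) : ℝ :=
  sInf {l | 0 ≤ l ∧ ∃ sp ∈ SepSet α β, ∃ sm ∈ SepSet α β,
    (X + (l : ℂ) • sm).PosSemidef ∧ ((l : ℂ) • sp - X).PosSemidef}

/-- The two-qubit maximally entangled state `Φ₂ = |Φ₂⟩⟨Φ₂|`,
`|Φ₂⟩ = (|00⟩ + |11⟩)/√2`. -/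
def phi2 : HMat (Fin 2 × Fin 2) :=
  rankOne (fun p => if p.1 = p.2 then ((Real.sqrt 2 : ℂ))⁻¹ else 0)

/-- The tempered reshuffled negativity
`N_τ^R(ρ) = max {⟨W,ρ⟩ : ‖W^R‖∞ ≤ 1, ⟨W,ρ⟩ = ‖W‖∞}`. -/
def NtauR {dA dB : ℕ} (ρ : HMat (Fin dA × Fin dB)) : ℝ :=
  sSup {v | ∃ W : HMat (Fin dA × Fin dB),
    opNormRect (reshuffle W.1) ≤ 1 ∧ hip W ρ = opNorm W ∧ v = hip W ρ}

/-! ### Operator bounds and tensor powers -/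

/-- `M` is bounded by `c` as an operator between Euclidean spaces: `‖M v‖ ≤ c ‖v‖` for all `v`,
written with coordinates. -/
def BddOp {α β : Type} [Fintype α] [Fintype β] (M : Matrix α β ℂ) (c : ℝ) : Prop :=
  ∀ v : β → ℂ, ∑ a, ‖∑ b, M a b * v b‖ ^ 2 ≤ c ^ 2 * ∑ b, ‖v b‖ ^ 2

open scoped Matrix.Norms.L2Operator in
theorem l2norm_le_of_eigenvalues {A : Matrix ι ι ℂ} (hA : A.IsHermitian) {c : ℝ} (hc : 0 ≤ c)
    (h : ∀ i, |hA.eigenvalues i| ≤ c) : ‖A‖ ≤ c := by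
  rw [hA.spectral_theorem]
  simp only [Unitary.conjStarAlgAut_apply]
  rw [mul_assoc, CStarRing.norm_coe_unitary_mul, ← Unitary.coe_star, CStarRing.norm_mul_coe_unitary,
    Matrix.l2_opNorm_diagonal, pi_norm_le_iff_of_nonneg hc]
  intro i
  simpa using h i

open scoped Matrix.Norms.L2Operator in
theorem bddOp_of_l2norm {α β : Type} [Fintype α] [Fintype β] [DecidableEq β] {M : Matrix α β ℂ}
    {c : ℝ} (h : ‖M‖ ≤ c) : BddOp M c := by
  intro v
  have h1 := Matrix.l2_opNorm_mulVec M (WithLp.toLp 2 v)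
  have h2 : ‖WithLp.toLp 2 (M.mulVec v)‖ ^ 2 ≤ (c * ‖WithLp.toLp 2 v‖) ^ 2 := by
    gcongr
    exact h1.trans (by gcongr)
  rw [mul_pow, EuclideanSpace.norm_sq_eq, EuclideanSpace.norm_sq_eq] at h2
  exact h2

theorem bddOp_of_opNorm (W : HMat ι) : BddOp W.1 (opNorm W) := by
  refine bddOp_of_l2norm (l2norm_le_of_eigenvalues (herm W) ?_ ?_)
  · exact Real.iSup_nonneg fun i => abs_nonneg _
  · exact fun i => le_ciSup (f := fun i => |(herm W).eigenvalues i|) (Set.finite_range _).bddAbove i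

open scoped Matrix.Norms.L2Operator in
theorem bddOp_of_opNormRect {α β : Type} [Fintype α] [Fintype β] [DecidableEq β]
    {M : Matrix α β ℂ} (h : opNormRect M ≤ 1) : BddOp M 1 := by
  classical
  refine bddOp_of_l2norm ?_
  have hps := Matrix.posSemidef_conjTranspose_mul_self M
  have h1 : ‖M.conjTranspose * M‖ ≤ 1 := by
    refine l2norm_le_of_eigenvalues hps.1 zero_le_one fun i => ?_
    rw [abs_of_nonneg (hps.eigenvalues_nonneg i), ← Real.sqrt_le_one]
    exact (le_ciSup (f := fun i => √(hps.1.eigenvalues i)) (Set.finite_range _).bddAbove i).trans h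
  rw [Matrix.l2_opNorm_conjTranspose_mul_self] at h1
  nlinarith [norm_nonneg M]

theorem BddOp.submatrix {α β α' β' : Type} [Fintype α] [Fintype β] [Fintype α'] [Fintype β']
    {M : Matrix α β ℂ} {c : ℝ} (h : BddOp M c) (e : α' ≃ α) (f : β' ≃ β) :
    BddOp (M.submatrix e f) c := by
  intro v
  have := h (v ∘ f.symm)
  rw [← e.sum_comp, ← f.sum_comp (fun b => ‖(v ∘ f.symm) b‖ ^ 2)] at this
  simp_rw [← f.sum_comp (fun b => M _ b * (v ∘ f.symm) b)] at this
  simpa using this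

/-- The `m`-th tensor power of a rectangular matrix. -/
def tpow {α β : Type} (M : Matrix α β ℂ) (m : ℕ) : Matrix (Fin m → α) (Fin m → β) ℂ :=
  Matrix.of fun f g => ∏ k, M (f k) (g k)

theorem sum_fin_succ {α E : Type} [Fintype α] [AddCommMonoid E] (m : ℕ)
    (F : (Fin (m + 1) → α) → E) :
    ∑ f, F f = ∑ a, ∑ f : Fin m → α, F (Fin.cons a f) := by
  rw [← (Fin.consEquiv fun _ => α).sum_comp, Fintype.sum_prod_type]
  rfl

/-- Boundedness is multiplicative under tensor powers: one applies the bound for `M` in the first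
tensor factor and the inductive bound in the remaining ones. -/
theorem BddOp.tpow {α β : Type} [Fintype α] [Fintype β] {M : Matrix α β ℂ} {c : ℝ}
    (h : BddOp M c) (m : ℕ) : BddOp (tpow M m) (c ^ m) := by
  induction m with
  | zero => intro v; simp [_root_.tpow]
  | succ m ih =>
    intro v
    set u : β → (Fin m → α) → ℂ := fun b f => ∑ g, _root_.tpow M m f g * v (Fin.cons b g)
    calc ∑ f, ‖∑ g, _root_.tpow M (m + 1) f g * v g‖ ^ 2
        = ∑ f : Fin m → α, ∑ a, ‖∑ b, M a b * u b f‖ ^ 2 := by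
          rw [sum_fin_succ, Finset.sum_comm]
          refine Finset.sum_congr rfl fun f _ => Finset.sum_congr rfl fun a _ => ?_
          rw [sum_fin_succ]
          simp [u, _root_.tpow, Fin.prod_univ_succ, Finset.mul_sum, mul_assoc]
      _ ≤ ∑ f : Fin m → α, c ^ 2 * ∑ b, ‖u b f‖ ^ 2 :=
          Finset.sum_le_sum fun f _ => h (fun b => u b f)
      _ = c ^ 2 * ∑ b, ∑ f, ‖u b f‖ ^ 2 := by rw [← Finset.mul_sum, Finset.sum_comm]
      _ ≤ c ^ 2 * ∑ b, (c ^ m) ^ 2 * ∑ g, ‖v (Fin.cons b g)‖ ^ 2 := by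
          gcongr with b
          exact ih _
      _ = (c ^ (m + 1)) ^ 2 * ∑ g, ‖v g‖ ^ 2 := by
          rw [sum_fin_succ _ (fun g => ‖v g‖ ^ 2), ← Finset.mul_sum]; ring

theorem BddOp.form_le {α β : Type} [Fintype α] [Fintype β] {M : Matrix α β ℂ} {c : ℝ}
    (hc : 0 ≤ c) (h : BddOp M c) (u : α → ℂ) (v : β → ℂ) (hu : ∑ a, ‖u a‖ ^ 2 = 1)
    (hv : ∑ b, ‖v b‖ ^ 2 = 1) : ‖∑ a, u a * ∑ b, M a b * v b‖ ≤ c := by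
  have h1 := h v
  have h2 := Finset.sum_mul_sq_le_sq_mul_sq Finset.univ (fun a => ‖u a‖)
    (fun a => ‖∑ b, M a b * v b‖)
  rw [hv] at h1
  rw [hu] at h2
  have h3 : ‖∑ a, u a * ∑ b, M a b * v b‖ ≤ ∑ a, ‖u a‖ * ‖∑ b, M a b * v b‖ :=
    (norm_sum_le _ _).trans (by simp)
  exact h3.trans (abs_le_of_sq_le_sq' (by linarith) hc).2

/-- Hölder's inequality `|⟨Q, X⟩| ≤ ‖Q‖∞ ‖X‖₁`, from the spectral decomposition of `X`. -/
theorem abs_hip_le {Q : HMat ι} {c : ℝ} (hc : 0 ≤ c) (hQ : BddOp Q.1 c) (X : HMat ι) :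
    |hip Q X| ≤ c * trNorm X := by
  set U := (herm X).eigenvectorUnitary
  have hX : ∀ b a, X.1 b a = ∑ i, U.1 b i * ((herm X).eigenvalues i : ℂ) * star (U.1 a i) := by
    intro b a
    have := congrFun (congrFun (herm X).spectral_theorem b) a
    rw [Unitary.conjStarAlgAut_apply, Matrix.mul_apply] at this
    rw [this]
    simp [Matrix.mul_diagonal, U]
  have hU : ∀ i, ∑ a, ‖U.1 a i‖ ^ 2 = 1 := by
    intro i
    have h1 : star U.1 * U.1 = 1 := Unitary.coe_star_mul_self U
    have h2 := congrFun (congrFun h1 i) i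
    rw [Matrix.mul_apply] at h2
    simp only [Matrix.star_apply, Matrix.one_apply_eq] at h2
    have h3 : ((∑ a, ‖U.1 a i‖ ^ 2 : ℝ) : ℂ) = 1 := by
      rw [← h2]
      push_cast
      exact Finset.sum_congr rfl fun a _ => (Complex.conj_mul' _).symm
    exact_mod_cast h3
  have htr : Matrix.trace (Q.1 * X.1) = ∑ i, ((herm X).eigenvalues i : ℂ) *
      ∑ a, star (U.1 a i) * ∑ b, Q.1 a b * U.1 b i := by
    simp only [Matrix.trace, Matrix.diag, Matrix.mul_apply, hX, Finset.mul_sum]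
    rw [Finset.sum_congr rfl fun a _ => Finset.sum_comm, Finset.sum_comm]
    refine Finset.sum_congr rfl fun i _ => Finset.sum_congr rfl fun a _ =>
      Finset.sum_congr rfl fun b _ => ?_
    ring
  rw [hip, htr]
  refine (Complex.abs_re_le_norm _).trans ((norm_sum_le _ _).trans ?_)
  rw [trNorm, Finset.mul_sum]
  refine Finset.sum_le_sum fun i _ => ?_
  rw [norm_mul, Complex.norm_real, Real.norm_eq_abs, mul_comm]
  gcongr
  exact hQ.form_le hc _ _ (by simpa using hU i) (hU i)

/-! ### Decompositions into separable states -/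

/-- The operator `|ψ⟩⟨ψ| ⊗ |χ⟩⟨χ|`, for vectors that need not be normalised. -/
def prodOp {α β : Type} (ψ : α → ℂ) (χ : β → ℂ) : Matrix (α × β) (α × β) ℂ :=
  Matrix.of fun p q : α × β =>
    ψ p.1 * (starRingEnd ℂ) (ψ q.1) * (χ p.2 * (starRingEnd ℂ) (χ q.2))

/-- `X` has a decomposition `X = λ₊σ₊ − λ₋σ₋` into separable states with `λ₊ + λ₋ = r`. -/
def Dec {α β : Type} [Fintype α] [Fintype β] (X : Matrix (α × β) (α × β) ℂ) (r : ℝ) : Prop :=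
  ∃ (lp lm : ℝ) (sp sm : Matrix (α × β) (α × β) ℂ),
    0 ≤ lp ∧ 0 ≤ lm ∧ sp ∈ SepSet α β ∧ sm ∈ SepSet α β ∧
    X = (lp : ℂ) • sp - (lm : ℂ) • sm ∧ r = lp + lm

section sep
variable {α β : Type} [Fintype α] [Fintype β]

theorem prodOp_mem_sepSet {ψ : α → ℂ} {χ : β → ℂ} (hψ : ∑ i, Complex.normSq (ψ i) = 1)
    (hχ : ∑ i, Complex.normSq (χ i) = 1) : prodOp ψ χ ∈ SepSet α β :=
  ⟨1, fun _ => 1, fun _ => ψ, fun _ => χ, by simp, by simp, fun _ => hψ, fun _ => hχ,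
    by simp [prodOp]⟩

theorem sepSet_convex {s t : Matrix (α × β) (α × β) ℂ} (hs : s ∈ SepSet α β)
    (ht : t ∈ SepSet α β) {a b : ℝ} (ha : 0 ≤ a) (hb : 0 ≤ b) (hab : a + b = 1) :
    (a : ℂ) • s + (b : ℂ) • t ∈ SepSet α β := by
  obtain ⟨m, q, ψ, χ, hq, hq1, hψ, hχ, rfl⟩ := hs
  obtain ⟨m', q', ψ', χ', hq', hq1', hψ', hχ', rfl⟩ := ht
  refine ⟨m + m', Fin.append (fun i => a * q i) (fun i => b * q' i), Fin.append ψ ψ',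
    Fin.append χ χ', ?_, ?_, ?_, ?_, ?_⟩
  · intro i
    refine Fin.addCases (fun i => ?_) (fun i => ?_) i
    · simpa using mul_nonneg ha (hq i)
    · simpa using mul_nonneg hb (hq' i)
  · simp [Fin.sum_univ_add, ← Finset.mul_sum, hq1, hq1', hab]
  · intro i
    refine Fin.addCases (fun i => ?_) (fun i => ?_) i
    · simpa using hψ i
    · simpa using hψ' i
  · intro i
    refine Fin.addCases (fun i => ?_) (fun i => ?_) i
    · simpa using hχ i
    · simpa using hχ' i
  · simp [Fin.sum_univ_add, Finset.smul_sum, smul_smul]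

/-- Two nonnegative multiples of separable states add up to such a multiple. -/
theorem sepSet_cone_add {s t : Matrix (α × β) (α × β) ℂ} (hs : s ∈ SepSet α β)
    (ht : t ∈ SepSet α β) {a b : ℝ} (ha : 0 ≤ a) (hb : 0 ≤ b) :
    ∃ w ∈ SepSet α β, (a : ℂ) • s + (b : ℂ) • t = ((a + b : ℝ) : ℂ) • w := by
  rcases (add_nonneg ha hb).eq_or_lt with h | h
  · obtain rfl : a = 0 := by linarith
    obtain rfl : b = 0 := by linarith
    exact ⟨s, hs, by simp⟩
  · refine ⟨_, sepSet_convex hs ht (a := a / (a + b)) (b := b / (a + b)) (by positivity)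
      (by positivity) (by field_simp), ?_⟩
    have : (a : ℂ) + b ≠ 0 := by exact_mod_cast h.ne'
    rw [smul_add, smul_smul, smul_smul]
    push_cast
    rw [mul_div_cancel₀ _ this, mul_div_cancel₀ _ this]

theorem Dec.add {X Y : Matrix (α × β) (α × β) ℂ} {r s : ℝ} (hX : Dec X r) (hY : Dec Y s) :
    Dec (X + Y) (r + s) := by
  obtain ⟨a, b, s₁, s₂, ha, hb, hs₁, hs₂, rfl, rfl⟩ := hX
  obtain ⟨a', b', t₁, t₂, ha', hb', ht₁, ht₂, rfl, rfl⟩ := hY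
  obtain ⟨w₁, hw₁, e₁⟩ := sepSet_cone_add hs₁ ht₁ ha ha'
  obtain ⟨w₂, hw₂, e₂⟩ := sepSet_cone_add hs₂ ht₂ hb hb'
  refine ⟨a + a', b + b', w₁, w₂, by positivity, by positivity, hw₁, hw₂, ?_, by ring⟩
  rw [← e₁, ← e₂]
  abel

theorem Dec.smul {X : Matrix (α × β) (α × β) ℂ} {r : ℝ} (hX : Dec X r) (c : ℝ) :
    Dec ((c : ℂ) • X) (|c| * r) := by
  obtain ⟨a, b, s₁, s₂, ha, hb, hs₁, hs₂, rfl, rfl⟩ := hX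
  rcases le_total 0 c with hc | hc
  · refine ⟨c * a, c * b, s₁, s₂, by positivity, by positivity, hs₁, hs₂, ?_, ?_⟩
    · simp only [smul_sub, smul_smul, Complex.ofReal_mul]
    · rw [abs_of_nonneg hc]; ring
  · refine ⟨-c * b, -c * a, s₂, s₁, mul_nonneg (by linarith) hb, mul_nonneg (by linarith) ha,
      hs₂, hs₁, ?_, ?_⟩
    · simp only [smul_sub, smul_smul, Complex.ofReal_mul, Complex.ofReal_neg, neg_mul, neg_smul]
      abel
    · rw [abs_of_nonpos hc]; ring

theorem sepSet_nonempty [Nonempty α] [Nonempty β] : (SepSet α β).Nonempty := by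
  classical
  obtain ⟨a⟩ := ‹Nonempty α›
  obtain ⟨b⟩ := ‹Nonempty β›
  exact ⟨_, prodOp_mem_sepSet (ψ := Pi.single a 1) (χ := Pi.single b 1)
    (by simp [Pi.single_apply, apply_ite Complex.normSq])
    (by simp [Pi.single_apply, apply_ite Complex.normSq])⟩

theorem Dec.of_mem {X : Matrix (α × β) (α × β) ℂ} (hX : X ∈ SepSet α β) : Dec X 1 :=
  ⟨1, 0, X, X, by simp, by simp, hX, hX, by simp, by simp⟩

theorem Dec.zero [Nonempty α] [Nonempty β] : Dec (0 : Matrix (α × β) (α × β) ℂ) 0 := by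
  obtain ⟨s, hs⟩ := sepSet_nonempty (α := α) (β := β)
  exact ⟨0, 0, s, s, le_rfl, le_rfl, hs, hs, by simp, by simp⟩

theorem Dec.sum [Nonempty α] [Nonempty β] {τ : Type} (S : Finset τ)
    {X : τ → Matrix (α × β) (α × β) ℂ} {r : τ → ℝ} (h : ∀ t ∈ S, Dec (X t) (r t)) :
    Dec (∑ t ∈ S, X t) (∑ t ∈ S, r t) := by
  classical
  induction S using Finset.induction_on with
  | empty => simpa using Dec.zero
  | insert a S ha ih =>
    rw [Finset.sum_insert ha, Finset.sum_insert ha]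
    exact (h _ (by simp)).add (ih fun t ht => h t (by simp [ht]))

theorem exists_unit_vec [Nonempty α] (ψ : α → ℂ) :
    ∃ φ : α → ℂ, ∑ i, Complex.normSq (φ i) = 1 ∧
      ψ = (√(∑ i, Complex.normSq (ψ i)) : ℂ) • φ := by
  classical
  set N := ∑ i, Complex.normSq (ψ i) with hN
  have hN0 : 0 ≤ N := Finset.sum_nonneg fun i _ => Complex.normSq_nonneg _
  rcases hN0.eq_or_lt with h | h
  · obtain ⟨a⟩ := ‹Nonempty α›
    refine ⟨Pi.single a 1, by simp [Pi.single_apply, apply_ite Complex.normSq], ?_⟩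
    have := (Finset.sum_eq_zero_iff_of_nonneg fun i _ => Complex.normSq_nonneg (ψ i)).1
      (hN.symm.trans h.symm)
    ext i
    rw [← h]
    simpa using this i
  · refine ⟨((√N : ℝ) : ℂ)⁻¹ • ψ, ?_, ?_⟩
    · simp only [Pi.smul_apply, smul_eq_mul, map_mul, map_inv₀, Complex.normSq_ofReal,
        Real.mul_self_sqrt hN0, ← Finset.mul_sum]
      exact inv_mul_cancel₀ h.ne'
    · have : ((√N : ℝ) : ℂ) ≠ 0 := by exact_mod_cast (Real.sqrt_pos.2 h).ne'
      rw [smul_smul, mul_inv_cancel₀ this, one_smul]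

/-- An unnormalised product operator is its trace times a separable state. -/
theorem Dec.prodOp [Nonempty α] [Nonempty β] (ψ : α → ℂ) (χ : β → ℂ) :
    Dec (prodOp ψ χ) ((∑ i, Complex.normSq (ψ i)) * ∑ j, Complex.normSq (χ j)) := by
  obtain ⟨φ, hφ, hψ⟩ := exists_unit_vec ψ
  obtain ⟨η, hη, hχ⟩ := exists_unit_vec χ
  set N := ∑ i, Complex.normSq (ψ i)
  set N' := ∑ j, Complex.normSq (χ j)
  have hN : 0 ≤ N := Finset.sum_nonneg fun i _ => Complex.normSq_nonneg _
  have hN' : 0 ≤ N' := Finset.sum_nonneg fun i _ => Complex.normSq_nonneg _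
  have h := (Dec.of_mem (prodOp_mem_sepSet hφ hη)).smul (N * N')
  rw [abs_of_nonneg (mul_nonneg hN hN'), mul_one] at h
  convert h using 1
  have e : ((√N : ℝ) : ℂ) * (√N : ℝ) = N := by exact_mod_cast Real.mul_self_sqrt hN
  have e' : ((√N' : ℝ) : ℂ) * (√N' : ℝ) = N' := by exact_mod_cast Real.mul_self_sqrt hN'
  ext p p'
  rw [hψ, hχ]
  simp only [_root_.prodOp, Matrix.of_apply, Matrix.smul_apply, Pi.smul_apply, smul_eq_mul,
    map_mul, Complex.conj_ofReal, Complex.ofReal_mul, ← e, ← e']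
  ring

/-- Polarisation in coordinates. With `x, x'` the coordinates of one basis vector and `y, y'` those
of another, it writes the matrix unit `|i⟩⟨k|` as a complex combination of the four operators
`|v⟩⟨v|` with `v = eᵢ + Iˢ eₖ`. -/
theorem polar (x y x' y' : ℂ) :
    x * (starRingEnd ℂ) y' = ∑ s : Fin 4, (1 / 4 * Complex.I ^ (s : ℕ)) *
      ((x + Complex.I ^ (s : ℕ) * y) * (starRingEnd ℂ) (x' + Complex.I ^ (s : ℕ) * y')) := by
  have hI : Complex.I ^ 2 = -1 := Complex.I_sq
  have hI3 : Complex.I ^ 3 = -Complex.I := by rw [pow_succ, hI]; ring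
  simp only [Fin.sum_univ_four, map_add, map_mul, map_pow, Complex.conj_I]
  simp [hI, hI3]
  ring_nf
  simp [hI, hI3]
  ring

/-- Every Hermitian operator is a difference of multiples of separable states: it is a complex
combination of product operators by polarisation, and taking Hermitian parts makes the
coefficients real. Hence the infimum defining the base norm runs over a nonempty set. -/
theorem exists_dec [Nonempty α] [Nonempty β] {X : Matrix (α × β) (α × β) ℂ}
    (hX : X.IsHermitian) : ∃ r, Dec X r := by
  classical
  let v (i k : α) (s : Fin 4) : α → ℂ := fun a => (if a = i then 1 else 0) +
    Complex.I ^ (s : ℕ) * (if a = k then 1 else 0)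
  let w (i k : β) (s : Fin 4) : β → ℂ := fun a => (if a = i then 1 else 0) +
    Complex.I ^ (s : ℕ) * (if a = k then 1 else 0)
  let T := ((α × β) × (α × β)) × (Fin 4 × Fin 4)
  let C (t : T) : ℂ := X t.1.1 t.1.2 * ((1 / 4 * Complex.I ^ (t.2.1 : ℕ)) *
    (1 / 4 * Complex.I ^ (t.2.2 : ℕ)))
  let P (t : T) : Matrix (α × β) (α × β) ℂ :=
    prodOp (v t.1.1.1 t.1.2.1 t.2.1) (w t.1.1.2 t.1.2.2 t.2.2)
  have hP (t : T) : (P t).IsHermitian := by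
    refine Matrix.IsHermitian.ext fun i j => ?_
    simp only [P, prodOp, Matrix.of_apply, star_mul', RCLike.star_def, Complex.conj_conj]
    ring
  have h1 : X = ∑ t, C t • P t := by
    ext p p'
    have hs : X p p' = ∑ q, ∑ q', X q q' * (((if p.1 = q.1 then 1 else 0) *
        (starRingEnd ℂ) (if p'.1 = q'.1 then 1 else 0)) * ((if p.2 = q.2 then 1 else 0) *
        (starRingEnd ℂ) (if p'.2 = q'.2 then 1 else 0))) := by
      rw [Finset.sum_eq_single p, Finset.sum_eq_single p']
      · simp
      · intro q _ hq
        have : ¬ (p'.1 = q.1 ∧ p'.2 = q.2) := fun h => hq (Prod.ext h.1.symm h.2.symm)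
        by_cases h : p'.1 = q.1 <;> simp_all
      · simp
      · intro q _ hq
        have : ¬ (p.1 = q.1 ∧ p.2 = q.2) := fun h => hq (Prod.ext h.1.symm h.2.symm)
        by_cases h : p.1 = q.1 <;> simp_all
      · simp
    have hR (F : T → ℂ) : ∑ t, F t = ∑ q, ∑ q', ∑ s, ∑ s', F ((q, q'), (s, s')) := by
      rw [Fintype.sum_prod_type, Fintype.sum_prod_type]
      exact Finset.sum_congr rfl fun q _ => Finset.sum_congr rfl fun q' _ =>
        Fintype.sum_prod_type _
    rw [hs, Matrix.sum_apply, hR]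
    refine Finset.sum_congr rfl fun q _ => Finset.sum_congr rfl fun q' _ => ?_
    rw [polar _ (if p.1 = q'.1 then 1 else 0) (if p'.1 = q.1 then 1 else 0),
      polar _ (if p.2 = q'.2 then 1 else 0) (if p'.2 = q.2 then 1 else 0),
      Finset.sum_mul_sum, Finset.mul_sum]
    refine Finset.sum_congr rfl fun s _ => ?_
    rw [Finset.mul_sum]
    refine Finset.sum_congr rfl fun s' _ => ?_
    simp only [Matrix.smul_apply, smul_eq_mul, C, P, prodOp, Matrix.of_apply, v, w]
    ring
  have h2 : X = ∑ t, (((C t).re : ℝ) : ℂ) • P t := by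
    have h3 : X = ∑ t, star (C t) • P t := by
      conv_lhs => rw [← hX.eq, h1]
      rw [Matrix.conjTranspose_sum]
      exact Finset.sum_congr rfl fun t _ => by rw [Matrix.conjTranspose_smul, (hP t).eq]
    have h4 : (2 : ℂ) • X = (2 : ℂ) • ∑ t, (((C t).re : ℝ) : ℂ) • P t := by
      rw [two_smul]
      nth_rewrite 1 [h1]
      rw [h3, ← Finset.sum_add_distrib, Finset.smul_sum]
      refine Finset.sum_congr rfl fun t _ => ?_
      rw [← add_smul, smul_smul]
      congr 1
      rw [RCLike.star_def, Complex.add_conj]; push_cast; ring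
    exact smul_right_injective (Matrix (α × β) (α × β) ℂ) (two_ne_zero (α := ℂ)) h4
  rw [h2]
  exact ⟨_, Dec.sum Finset.univ fun t _ => (Dec.prodOp _ _).smul _⟩

theorem Dec.nonneg {X : Matrix (α × β) (α × β) ℂ} {r : ℝ} (h : Dec X r) : 0 ≤ r := by
  obtain ⟨a, b, s₁, s₂, ha, hb, hs₁, hs₂, rfl, rfl⟩ := h
  positivity

theorem sepBaseNorm_le {X : Matrix (α × β) (α × β) ℂ} {r : ℝ} (h : Dec X r) :
    sepBaseNorm X ≤ r :=
  csInf_le ⟨0, fun _ h => Dec.nonneg h⟩ h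

end sep

/-! ### The base norm of the maximally entangled state -/

section phi
variable {κ : Type} [Fintype κ] [DecidableEq κ]

/-- The character sum behind the phase twirl: over independent uniform third roots of unity,
`𝔼[uᵢ ūₖ ūⱼ uₗ]` is `1` if the phases pair off and `0` otherwise. Third roots are used because
`𝔼[u²] = 0` then holds. -/
theorem phase_avg (i j k l : κ) :
    ∑ f : κ → ZMod 3, (ZMod.stdAddChar (f i - f k - (f j - f l)) : ℂ) =
      if (i = k ∧ j = l) ∨ (i = j ∧ k = l) then (3 : ℂ) ^ Fintype.card κ else 0 := by
  split_ifs with h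
  · have : ∀ f : κ → ZMod 3, f i - f k - (f j - f l) = 0 := by
      rintro f
      rcases h with ⟨rfl, rfl⟩ | ⟨rfl, rfl⟩ <;> simp
    simp [this, AddChar.map_zero_eq_one, ZMod.card]
  · -- the character is nontrivial: shifting `f` by a suitable `x` rescales the sum by a root `≠ 1`
    obtain ⟨x, hx⟩ : ∃ g : κ → ZMod 3, g i - g k - (g j - g l) ≠ 0 := by
      by_contra! hg
      apply h
      -- no coefficient, of absolute value at most `2`, can vanish mod 3 without being `0`
      have hi := hg (Pi.single i 1)
      have hk := hg (Pi.single k 1)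
      have hj := hg (Pi.single j 1)
      have hl := hg (Pi.single l 1)
      have t1 : (1 : ZMod 3) - 0 - (0 - 1) ≠ 0 := by decide
      have t2 : (1 : ZMod 3) - 0 - (0 - 0) ≠ 0 := by decide
      simp only [Pi.single_apply] at hi hk hj hl
      by_cases h1 : i = k <;> by_cases h2 : i = j <;> by_cases h3 : i = l <;>
        by_cases h4 : k = j <;> by_cases h5 : k = l <;> by_cases h6 : j = l <;>
        simp_all [eq_comm]
    set S := ∑ f : κ → ZMod 3, (ZMod.stdAddChar (f i - f k - (f j - f l)) : ℂ) with hS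
    have h1 : S = ZMod.stdAddChar (x i - x k - (x j - x l)) * S := by
      conv_lhs => rw [hS, ← Equiv.sum_comp (Equiv.addRight x)]
      rw [hS, Finset.mul_sum]
      refine Finset.sum_congr rfl fun f _ => ?_
      rw [← AddChar.map_add_eq_mul]
      congr 1
      simp only [Equiv.coe_addRight, Pi.add_apply]
      ring
    have h2 : (ZMod.stdAddChar (x i - x k - (x j - x l)) : ℂ) ≠ 1 := by
      rw [← AddChar.map_zero_eq_one (ZMod.stdAddChar (N := 3))]
      exact fun h => hx (ZMod.injective_stdAddChar h)
    have h3 : (1 - (ZMod.stdAddChar (x i - x k - (x j - x l)) : ℂ)) * S = 0 := by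
      rw [sub_mul, one_mul, ← h1, sub_self]
    exact (mul_eq_zero.1 h3).resolve_left (sub_ne_zero.2 h2.symm)

/-- `d` times the maximally entangled state of local dimension `d = |κ|`. -/
def entOp (κ : Type) [DecidableEq κ] : Matrix (κ × κ) (κ × κ) ℂ :=
  Matrix.of fun p p' => if p.1 = p.2 ∧ p'.1 = p'.2 then 1 else 0

/-- Averaging `|u⟩⟨u| ⊗ |ū⟩⟨ū|` over phase vectors `u` gives the (unnormalised) maximally
entangled state plus the diagonal separable operator `∑_{i ≠ j} |ij⟩⟨ij|`; with `d = |κ|`, these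
have traces `d²` and `d² − d`. -/
theorem dec_entOp [Nonempty κ] :
    ∃ r ≤ 2 * (Fintype.card κ : ℝ) ^ 2, Dec (entOp κ) r := by
  set d : ℝ := (Fintype.card κ : ℝ) with hd
  let u (f : κ → ZMod 3) : κ → ℂ := fun i => ZMod.stdAddChar (f i)
  let w (f : κ → ZMod 3) : κ → ℂ := fun i => ZMod.stdAddChar (-f i)
  let K : ℝ := 3 ^ Fintype.card κ
  have hn (x : ZMod 3) : Complex.normSq (ZMod.stdAddChar x) = 1 := by
    rw [ZMod.stdAddChar_apply, Complex.normSq_eq_norm_sq, Circle.norm_coe, one_pow]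
  have hK : (Fintype.card (κ → ZMod 3) : ℝ) = K := by simp [K, ZMod.card]
  have e : entOp κ = ((K⁻¹ : ℝ) : ℂ) • ∑ f : κ → ZMod 3, prodOp (u f) (w f) +
      (((-1 : ℝ)) : ℂ) • ∑ q : κ × κ, ((if q.1 = q.2 then 0 else 1 : ℝ) : ℂ) •
        prodOp (Pi.single q.1 1) (Pi.single q.2 1) := by
    ext ⟨i, j⟩ ⟨k, l⟩
    have h1 : (∑ f : κ → ZMod 3, prodOp (u f) (w f)) (i, j) (k, l) =
        if (i = k ∧ j = l) ∨ (i = j ∧ k = l) then (3 : ℂ) ^ Fintype.card κ else 0 := by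
      rw [← phase_avg, Matrix.sum_apply]
      refine Finset.sum_congr rfl fun f _ => ?_
      simp only [prodOp, Matrix.of_apply, u, w, ← AddChar.map_neg_eq_conj,
        ← AddChar.map_add_eq_mul]
      congr 1
      ring
    have h2 : (∑ q : κ × κ, ((if q.1 = q.2 then 0 else 1 : ℝ) : ℂ) •
        prodOp (Pi.single q.1 1) (Pi.single q.2 1)) (i, j) (k, l) =
        if i ≠ j ∧ (i = k ∧ j = l) then (1 : ℂ) else 0 := by
      rw [Matrix.sum_apply, Finset.sum_eq_single (i, j)]
      · by_cases hij : i = j <;> by_cases hik : i = k <;> by_cases hjl : j = l <;>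
          simp [prodOp, hij, hik, hjl, Pi.single_apply, eq_comm] <;> simp_all [eq_comm]
      · rintro ⟨a, b⟩ _ hab
        have : ¬ (i = a ∧ j = b) := fun h => hab (Prod.ext h.1.symm h.2.symm)
        by_cases h : i = a <;> simp_all [prodOp, Pi.single_apply]
      · simp
    rw [Matrix.add_apply, Matrix.smul_apply, Matrix.smul_apply, h1, h2]
    have hK0 : ((3 : ℂ) ^ Fintype.card κ) ≠ 0 := by positivity
    simp only [entOp, Matrix.of_apply, K]
    push_cast
    by_cases hij : i = j <;> by_cases hkl : k = l <;> by_cases hik : i = k <;>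
      by_cases hjl : j = l <;> simp_all
  have b1 : Dec (((K⁻¹ : ℝ) : ℂ) • ∑ f : κ → ZMod 3, prodOp (u f) (w f)) (d ^ 2) := by
    have := (Dec.sum Finset.univ fun f _ => Dec.prodOp (u f) (w f)).smul K⁻¹
    convert this using 1
    have hK0 : 0 < K := by positivity
    simp only [u, w, hn, Finset.sum_const, Finset.card_univ, nsmul_eq_mul, mul_one, hK,
      abs_of_pos (inv_pos.2 hK0)]
    field_simp
    rw [hd]
  have b2 := (Dec.sum (Finset.univ : Finset (κ × κ)) fun q _ =>
    (Dec.prodOp (Pi.single q.1 (1 : ℂ)) (Pi.single q.2 (1 : ℂ))).smul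
      (if q.1 = q.2 then 0 else 1)).smul (-1)
  rw [e]
  refine ⟨_, ?_, b1.add b2⟩
  have b3 : ∑ q : κ × κ, |(if q.1 = q.2 then 0 else 1 : ℝ)| *
      ((∑ i, Complex.normSq ((Pi.single q.1 1 : κ → ℂ) i)) *
        ∑ j, Complex.normSq ((Pi.single q.2 1 : κ → ℂ) j)) ≤ ∑ q : κ × κ, (1 : ℝ) := by
    refine Finset.sum_le_sum fun q _ => ?_
    simp only [Pi.single_apply, apply_ite Complex.normSq, map_one, map_zero,
      Finset.sum_ite_eq', Finset.mem_univ, if_true, mul_one]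
    split_ifs <;> simp
  have b4 : ∑ q : κ × κ, (1 : ℝ) = d ^ 2 := by simp [hd, sq]
  rw [b4] at b3
  rw [abs_neg, abs_one, one_mul]
  linarith

theorem tpowBip_phi2 (n : ℕ) :
    (tpowBip phi2 n).1 = (((2 ^ n)⁻¹ : ℝ) : ℂ) • entOp (Fin n → Fin 2) := by
  ext ⟨i, j⟩ ⟨k, l⟩
  have hs : ((√2 : ℝ) : ℂ)⁻¹ * ((√2 : ℝ) : ℂ)⁻¹ = 2⁻¹ := by
    rw [← mul_inv]; norm_cast; simp
  have : ∀ x, phi2.1 (i x, j x) (k x, l x) = 2⁻¹ * if i x = j x ∧ k x = l x then 1 else 0 := by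
    intro x
    by_cases h1 : i x = j x <;> by_cases h2 : k x = l x <;>
      simp [phi2, rankOne, Matrix.vecMulVec_apply, h1, h2, hs]
  simp only [tpowBip, entOp, Matrix.of_apply, Matrix.smul_apply, this, Finset.prod_mul_distrib,
    Finset.prod_ite_zero, funext_iff, smul_eq_mul]
  simp [forall_and]

theorem sepBaseNorm_phi2_le (n : ℕ) : sepBaseNorm (tpowBip phi2 n).1 ≤ 2 * 2 ^ n := by
  obtain ⟨r, hr, hd⟩ := dec_entOp (κ := Fin n → Fin 2)
  rw [tpowBip_phi2]
  refine (sepBaseNorm_le (hd.smul _)).trans ?_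
  have h : ((Fintype.card (Fin n → Fin 2) : ℕ) : ℝ) = 2 ^ n := by simp
  rw [h] at hr
  rw [abs_of_pos (by positivity), inv_mul_le_iff₀ (by positivity)]
  linarith

end phi

/-! ### Witnesses, separable states and asymptotics -/

section main_bounds
variable {α β : Type} [Fintype α] [Fintype β]

theorem hip_sub (Q X Y : HMat ι) : hip Q (X - Y) = hip Q X - hip Q Y := by
  simp [hip, mul_sub]

theorem trace_prodOp (W : Matrix (α × β) (α × β) ℂ) (ψ : α → ℂ) (χ : β → ℂ) :
    Matrix.trace (W * prodOp ψ χ) = ∑ ik : α × α, ((starRingEnd ℂ) (ψ ik.1) * ψ ik.2) *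
      ∑ jl : β × β, reshuffle W ik jl * ((starRingEnd ℂ) (χ jl.1) * χ jl.2) := by
  simp only [Matrix.trace, Matrix.diag, Matrix.mul_apply, Fintype.sum_prod_type, Finset.mul_sum]
  refine Finset.sum_congr rfl fun i _ => ?_
  rw [Finset.sum_comm]
  refine Finset.sum_congr rfl fun k _ => Finset.sum_congr rfl fun j _ =>
    Finset.sum_congr rfl fun l _ => ?_
  simp only [prodOp, Matrix.of_apply, reshuffle]
  ring

/-- Operators with `‖W^R‖∞ ≤ 1` take values of modulus at most `1` on separable states: on a
product state the value is a matrix element of `W^R` between unit vectors. -/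
theorem abs_trace_sep_le {W : Matrix (α × β) (α × β) ℂ} (hW : BddOp (reshuffle W) 1)
    {σ : Matrix (α × β) (α × β) ℂ} (hσ : σ ∈ SepSet α β) :
    |(Matrix.trace (W * σ)).re| ≤ 1 := by
  obtain ⟨m, q, ψ, χ, hq, hq1, hψ, hχ, rfl⟩ := hσ
  have hp {τ : Type} [Fintype τ] (φ : τ → ℂ) (hφ : ∑ i, Complex.normSq (φ i) = 1) :
      ∑ x : τ × τ, ‖(starRingEnd ℂ) (φ x.1) * φ x.2‖ ^ 2 = 1 := by
    simp only [norm_mul, RCLike.norm_conj, mul_pow, ← Complex.normSq_eq_norm_sq]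
    rw [Fintype.sum_prod_type]
    simp only
    rw [← Fintype.sum_mul_sum, hφ, one_mul]
  have h1 (t : Fin m) : ‖Matrix.trace (W * prodOp (ψ t) (χ t))‖ ≤ 1 := by
    rw [trace_prodOp]
    exact hW.form_le zero_le_one _ _ (hp _ (hψ t)) (hp _ (hχ t))
  refine (Complex.abs_re_le_norm _).trans ?_
  rw [Finset.mul_sum, Matrix.trace_sum, ← hq1]
  refine (norm_sum_le _ _).trans (Finset.sum_le_sum fun t _ => ?_)
  rw [Matrix.mul_smul, Matrix.trace_smul, norm_smul, Complex.norm_real, Real.norm_eq_abs,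
    abs_of_nonneg (hq t)]
  exact mul_le_of_le_one_right (hq t) (h1 t)

variable [DecidableEq α] [DecidableEq β]

theorem hip_le_sepBaseNorm [Nonempty α] [Nonempty β] {W : HMat (α × β)}
    (hW : BddOp (reshuffle W.1) 1) (X : HMat (α × β)) : hip W X ≤ sepBaseNorm X.1 := by
  refine le_csInf (exists_dec (herm X)) ?_
  rintro r ⟨a, b, s, t, ha, hb, hs, ht, hX, rfl⟩
  have h1 := (abs_le.1 (abs_trace_sep_le hW hs)).2
  have h2 := (abs_le.1 (abs_trace_sep_le hW ht)).1
  rw [hip, hX, mul_sub, Matrix.mul_smul, Matrix.mul_smul, Matrix.trace_sub, Matrix.trace_smul,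
    Matrix.trace_smul, Complex.sub_re, smul_eq_mul, smul_eq_mul, Complex.re_ofReal_mul,
    Complex.re_ofReal_mul]
  nlinarith

theorem bddOp_tpowBip {W : HMat (α × β)} {c : ℝ} (h : BddOp W.1 c) (m : ℕ) :
    BddOp (tpowBip W m).1 (c ^ m) :=
  (h.tpow m).submatrix (Equiv.arrowProdEquivProdArrow (Fin m) (fun _ => α) (fun _ => β)).symm
    (Equiv.arrowProdEquivProdArrow (Fin m) (fun _ => α) (fun _ => β)).symm

/-- Reshuffling commutes with tensor powers up to relabelling. -/
theorem bddOp_reshuffle_tpowBip {W : HMat (α × β)} (h : BddOp (reshuffle W.1) 1) (m : ℕ) :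
    BddOp (reshuffle (tpowBip W m).1) 1 := by
  have := (h.tpow m).submatrix
    (Equiv.arrowProdEquivProdArrow (Fin m) (fun _ => α) (fun _ => α)).symm
    (Equiv.arrowProdEquivProdArrow (Fin m) (fun _ => β) (fun _ => β)).symm
  rw [one_pow] at this
  exact this

theorem trace_eq_hip (Q X : HMat ι) : Matrix.trace (Q.1 * X.1) = (hip Q X : ℂ) := by
  refine (Complex.conj_eq_iff_re.1 ?_).symm
  rw [← RCLike.star_def, ← Matrix.trace_conjTranspose, Matrix.conjTranspose_mul, (herm Q).eq,
    (herm X).eq, Matrix.trace_mul_comm]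

theorem hip_tpowBip (W X : HMat (α × β)) (m : ℕ) :
    hip (tpowBip W m) (tpowBip X m) = hip W X ^ m := by
  have h : Matrix.trace ((tpowBip W m).1 * (tpowBip X m).1) = Matrix.trace (W.1 * X.1) ^ m := by
    simp only [Matrix.trace, Matrix.diag, Matrix.mul_apply]
    rw [Fintype.sum_pow]
    rw [← (Equiv.arrowProdEquivProdArrow (Fin m) (fun _ => α) (fun _ => β)).sum_comp]
    refine Finset.sum_congr rfl fun p _ => ?_
    rw [← (Equiv.arrowProdEquivProdArrow (Fin m) (fun _ => α) (fun _ => β)).sum_comp,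
      Fintype.prod_sum]
    refine Finset.sum_congr rfl fun q _ => ?_
    rw [Finset.prod_mul_distrib]
    rfl
  rw [trace_eq_hip, trace_eq_hip] at h
  exact_mod_cast h

/-- If `c ^ ⌊r n⌋ ≤ C 2 ^ n` for all large `n`, the growth rates compare: `c ^ r ≤ 2`. -/
theorem rpow_le_two_of_growth {c r C : ℝ} (hc : 1 < c)
    (h : ∀ᶠ n : ℕ in atTop, c ^ ⌊r * (n : ℝ)⌋₊ ≤ C * 2 ^ n) : c ^ r ≤ 2 := by
  by_contra! hlt
  have h0 : 0 < c := by linarith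
  have ht : Tendsto (fun n : ℕ => (c ^ r / 2) ^ n) atTop atTop :=
    tendsto_pow_atTop_atTop_of_one_lt (by rw [lt_div_iff₀] <;> linarith)
  obtain ⟨n, hn, hn'⟩ := (h.and (ht.eventually_gt_atTop (C * c))).exists
  have h1 : (c ^ r) ^ n ≤ c ^ ⌊r * (n : ℝ)⌋₊ * c := by
    rw [← Real.rpow_natCast (c ^ r), ← Real.rpow_mul h0.le, ← pow_succ, ← Real.rpow_natCast c]
    refine Real.rpow_le_rpow_of_exponent_le hc.le ?_
    push_cast
    exact (Nat.lt_floor_add_one _).le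
  rw [div_pow, lt_div_iff₀ (by positivity)] at hn'
  nlinarith

end main_bounds

/-- **Corollary 5 (reshuffling lower bound on the entanglement cost).**
If `r > 0` is an achievable dilution rate from `Φ₂` to `ρ` under maps contracting the trace
norm and the separable base norms, then `r · log₂ N_τ^R(ρ) ≤ 1`, i.e.\ the entanglement cost
of `ρ` is at least `log₂ N_τ^R(ρ)`. -/
theorem reshuffling_entanglement_cost_bound
    {dA dB : ℕ}
    (ρ : HMat (Fin dA × Fin dB)) (hρ : IsState ρ)
    (r : ℝ) (hr : 0 < r)
    (Λ : (n : ℕ) →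
      (HMat ((Fin n → Fin 2) × (Fin n → Fin 2)) →ₗ[ℝ]
        HMat ((Fin ⌊r * (n : ℝ)⌋₊ → Fin dA) × (Fin ⌊r * (n : ℝ)⌋₊ → Fin dB))))
    (hΛtr : ∀ (n : ℕ) X, trNorm ((Λ n) X) ≤ trNorm X)
    (hΛsep : ∀ (n : ℕ) X, sepBaseNorm ((Λ n) X).1 ≤ sepBaseNorm X.1)
    (hconv : Tendsto
      (fun n : ℕ => (1 / 2) * trNorm ((Λ n) (tpowBip phi2 n) - tpowBip ρ ⌊r * (n : ℝ)⌋₊))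
      atTop (nhds 0)) :
    r * Real.logb 2 (NtauR ρ) ≤ 1 := by
  -- it suffices to bound each feasible value by `2 ^ (1 / r)`
  suffices hv : NtauR ρ ≤ 2 ^ (1 / r) by
    have h0 : 0 ≤ NtauR ρ := by
      refine Real.sSup_nonneg ?_
      rintro v ⟨W, -, h, rfl⟩
      rw [h]
      exact Real.iSup_nonneg fun i => abs_nonneg _
    rcases h0.eq_or_lt with h | h
    · rw [← h]; simp
    · have := Real.logb_le_logb_of_le one_lt_two h hv
      rw [Real.logb_rpow two_pos (by norm_num)] at this
      calc r * Real.logb 2 (NtauR ρ) ≤ r * (1 / r) := by gcongr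
        _ = 1 := by field_simp
  refine Real.sSup_le ?_ (by positivity)
  rintro v ⟨W, hWR, hWv, rfl⟩
  rcases le_or_gt (hip W ρ) 1 with h1 | h1
  · exact h1.trans (Real.one_le_rpow one_le_two (by positivity))
  have hne : Nonempty (Fin dA × Fin dB) := by
    by_contra hne
    rw [not_nonempty_iff] at hne
    have := hρ.2
    simp [Matrix.trace] at this
  have hneA : Nonempty (Fin dA) := hne.map Prod.fst
  have hneB : Nonempty (Fin dB) := hne.map Prod.snd
  set c := hip W ρ
  have hc0 : 0 < c := by linarith
  have hB : BddOp W.1 c := hWv ▸ bddOp_of_opNorm W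
  have hgrow : ∀ᶠ n : ℕ in atTop, c ^ ⌊r * (n : ℝ)⌋₊ ≤ 4 * 2 ^ n := by
    filter_upwards [hconv.eventually_lt_const (show (0 : ℝ) < 1 / 4 by norm_num)] with n hn
    set m := ⌊r * (n : ℝ)⌋₊
    have e1 := (abs_le.1 (abs_hip_le (by positivity) (bddOp_tpowBip hB m)
      ((Λ n) (tpowBip phi2 n) - tpowBip ρ m))).1
    rw [hip_sub, hip_tpowBip] at e1
    have e2 := hip_le_sepBaseNorm (bddOp_reshuffle_tpowBip (bddOp_of_opNormRect hWR) m)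
      ((Λ n) (tpowBip phi2 n))
    have e3 := (hΛsep n (tpowBip phi2 n)).trans (sepBaseNorm_phi2_le n)
    have e4 : c ^ m * trNorm ((Λ n) (tpowBip phi2 n) - tpowBip ρ m) ≤ c ^ m * (1 / 2) := by
      gcongr
      linarith
    linarith
  have h2 := rpow_le_two_of_growth h1 hgrow
  calc c = (c ^ r) ^ (1 / r) := by
        rw [← Real.rpow_mul hc0.le, mul_one_div_cancel hr.ne', Real.rpow_one]
    _ ≤ 2 ^ (1 / r) := Real.rpow_le_rpow (by positivity) h2 (by positivity)
end
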